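/- The pair of local functions N₁_{(i)b}^{(a)} = χ^a_{bf} p^f_i and N₂_{(i)j}^{(a)} = γ^r_{ij}[(2e/m₀) A^{(a)}_{(r)} − p^a_r] − (e/m₀)[∂A^{(a)}_{(i)}/∂x^j + ∂A^{(a)}_{(j)}/∂x^i] is a nonlinear connection on the dual 1-jet space, in the following sense: for all smooth diffeomorphisms σ: T → T̃ ⊆ ℝ^m and τ: X → X̃ ⊆ ℝ^n with the transformed objects h̃_{ãb̃}(t̃) = h_{ab}(t) (∂t^a/∂t̃^ã)(∂t^b/∂t̃^b̃), φ̃_{ĩj̃}(x̃) = φ_{ij}(x)(∂x^i/∂x̃^ĩ)(∂x^j/∂x̃^j̃), Ã^{(ã)}_{(ĩ)} = A^{(a)}_{(i)} (∂t̃^ã/∂t^a)(∂x^i/∂x̃^ĩ), and the induced polymomenta transformation p̃^ã_ĩ = p^a_i (∂t̃^ã/∂t^a)(∂x^i/∂x̃^ĩ), the local 1-forms δp^a_i = dp^a_i + N₁_{(i)b}^{(a)} dt^b + N₂_{(i)j}^{(a)} dx^j transform tensorially: δp̃^ã_ĩ = (∂t̃^ã/∂t^a)(∂x^i/∂x̃^ĩ)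 δp^a_i, where δp̃ is built from (h̃, φ̃, Ã) by the same formulas (i.e., the two 1-forms agree on every tangent vector of T × X × ℝ^{m·n}). -/

import Mathlib

open scoped BigOperators
open Set

noncomputable section

/-- Partial derivative of a real-valued function on `ℝ^k` in the `a`-th coordinate direction. -/
def pd {k : ℕ} (f : (Fin k → ℝ) → ℝ) (a : Fin k) (t : Fin k → ℝ) : ℝ :=
  fderiv ℝ f t (Pi.single a 1)

/-- The Christoffel symbols `χ^a_{bc}` of a (semi-)Riemannian metric `g`. -/
def christoffel {k : ℕ} (g : (Fin k → ℝ) → Matrix (Fin k) (Fin k) ℝ)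
    (a b c : Fin k) (t : Fin k → ℝ) : ℝ :=
  (1 / 2) * ∑ d, (g t)⁻¹ a d *
    (pd (fun s => g s d c) b t + pd (fun s => g s b d) c t - pd (fun s => g s b c) d t)

/-- The curvature tensor `χ^f_{g a b}` of a (semi-)Riemannian metric. -/
def curvTensor {k : ℕ} (g : (Fin k → ℝ) → Matrix (Fin k) (Fin k) ℝ)
    (f gi a b : Fin k) (t : Fin k → ℝ) : ℝ :=
  pd (christoffel g f b gi) a t - pd (christoffel g f a gi) b t
    + ∑ hh, christoffel g f a hh t * christoffel g hh b gi t
    - ∑ hh, christoffel g f b hh t * christoffel g hh a gi t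

/-- The Ricci tensor `χ_{ab} = χ^f_{abf}`. -/
def ricci {k : ℕ} (g : (Fin k → ℝ) → Matrix (Fin k) (Fin k) ℝ)
    (a b : Fin k) (t : Fin k → ℝ) : ℝ :=
  ∑ f, curvTensor g f a b f t

/-- The scalar curvature `g^{ab} Ric_{ab}`. -/
def scalarCurv {k : ℕ} (g : (Fin k → ℝ) → Matrix (Fin k) (Fin k) ℝ)
    (t : Fin k → ℝ) : ℝ :=
  ∑ a, ∑ b, (g t)⁻¹ a b * ricci g a b t

/-- Partial derivative in a temporal direction of a function on `T × X`. -/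
def pdt {m n : ℕ} (f : (Fin m → ℝ) × (Fin n → ℝ) → ℝ) (a : Fin m)
    (q : (Fin m → ℝ) × (Fin n → ℝ)) : ℝ :=
  fderiv ℝ f q (Pi.single a 1, 0)

/-- Partial derivative in a spatial direction of a function on `T × X`. -/
def pdx {m n : ℕ} (f : (Fin m → ℝ) × (Fin n → ℝ) → ℝ) (i : Fin n)
    (q : (Fin m → ℝ) × (Fin n → ℝ)) : ℝ :=
  fderiv ℝ f q (0, Pi.single i 1)

/-- The local model of the dual 1-jet space: coordinates `(t^a, x^i, p^a_i)`. -/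
abbrev Jet (m n : ℕ) := (Fin m → ℝ) × (Fin n → ℝ) × (Fin m → Fin n → ℝ)

/-- `∂/∂t^a` on the dual 1-jet space. -/
def pdtJ {m n : ℕ} (F : Jet m n → ℝ) (a : Fin m) (q : Jet m n) : ℝ :=
  fderiv ℝ F q (Pi.single a 1, 0, 0)

/-- `∂/∂x^i` on the dual 1-jet space. -/
def pdxJ {m n : ℕ} (F : Jet m n → ℝ) (i : Fin n) (q : Jet m n) : ℝ :=
  fderiv ℝ F q (0, Pi.single i 1, 0)

/-- `∂/∂p^f_r` on the dual 1-jet space. -/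
def pdpJ {m n : ℕ} (F : Jet m n → ℝ) (f : Fin m) (r : Fin n) (q : Jet m n) : ℝ :=
  fderiv ℝ F q (0, 0, Pi.single f (Pi.single r 1))

/-- The temporal component `N₁_{(i)b}^{(a)} = χ^a_{bf} p^f_i` of the canonical
nonlinear connection. -/
def N1 {m n : ℕ} (h : (Fin m → ℝ) → Matrix (Fin m) (Fin m) ℝ)
    (a : Fin m) (i : Fin n) (b : Fin m) (q : Jet m n) : ℝ :=
  ∑ f, christoffel h a b f q.1 * q.2.2 f i

/-- The spatial component
`N₂_{(i)j}^{(a)} = γ^r_{ij}[(2e/m₀) A^{(a)}_{(r)} − p^a_r] − (e/m₀)[∂A^{(a)}_{(i)}/∂x^j + ∂A^{(a)}_{(j)}/∂x^i]`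
of the canonical nonlinear connection. -/
def N2 {m n : ℕ} (φ : (Fin n → ℝ) → Matrix (Fin n) (Fin n) ℝ)
    (A : Fin m → Fin n → (Fin m → ℝ) × (Fin n → ℝ) → ℝ) (e m₀ : ℝ)
    (a : Fin m) (i j : Fin n) (q : Jet m n) : ℝ :=
  ∑ r, christoffel φ r i j q.2.1 * ((2 * e / m₀) * A a r (q.1, q.2.1) - q.2.2 a r)
    - (e / m₀) * (pdx (A a i) j (q.1, q.2.1) + pdx (A a j) i (q.1, q.2.1))

/-- The adapted derivation `δ/δt^a = ∂/∂t^a − N₁_{(r)a}^{(f)} ∂/∂p^f_r`. -/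
def deltaT {m n : ℕ} (h : (Fin m → ℝ) → Matrix (Fin m) (Fin m) ℝ)
    (F : Jet m n → ℝ) (a : Fin m) (q : Jet m n) : ℝ :=
  pdtJ F a q - ∑ f, ∑ r, N1 h f r a q * pdpJ F f r q

/-- The adapted derivation `δ/δx^i = ∂/∂x^i − N₂_{(r)i}^{(f)} ∂/∂p^f_r`. -/
def deltaX {m n : ℕ} (φ : (Fin n → ℝ) → Matrix (Fin n) (Fin n) ℝ)
    (A : Fin m → Fin n → (Fin m → ℝ) × (Fin n → ℝ) → ℝ) (e m₀ : ℝ)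
    (F : Jet m n → ℝ) (i : Fin n) (q : Jet m n) : ℝ :=
  pdxJ F i q - ∑ f, ∑ r, N2 φ A e m₀ f r i q * pdpJ F f r q


/-- The Jacobian matrix of a map `σ : ℝ^k → ℝ^k`: `(Jσ t) ã a = ∂σ^ã/∂t^a`. -/
def jacobian {k : ℕ} (σ : (Fin k → ℝ) → (Fin k → ℝ)) (t : Fin k → ℝ) :
    Matrix (Fin k) (Fin k) ℝ :=
  Matrix.of fun atil a => pd (fun s => σ s atil) a t

/-- The local 1-form `δp^a_i = dp^a_i + N₁_{(i)b}^{(a)} dt^b + N₂_{(i)j}^{(a)} dx^j`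
evaluated at the point `q` on the tangent vector `V`. -/
def deltaPform {m n : ℕ} (h : (Fin m → ℝ) → Matrix (Fin m) (Fin m) ℝ)
    (φ : (Fin n → ℝ) → Matrix (Fin n) (Fin n) ℝ)
    (A : Fin m → Fin n → (Fin m → ℝ) × (Fin n → ℝ) → ℝ) (e m₀ : ℝ)
    (a : Fin m) (i : Fin n) (q : Jet m n) (V : Jet m n) : ℝ :=
  V.2.2 a i + ∑ b, N1 h a i b q * V.1 b + ∑ j, N2 φ A e m₀ a i j q * V.2.1 j

/-!
Contracted with `u^i`, the form `δp` is the covariant differential of the polymomenta minus `e / m₀`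
times the symmetrized spatial covariant derivative of the potentials, and each of the two is
tensorial. Writing `J` for a Jacobian, the Koszul formula turns the pullback law `g = Jᵀ g̃ J` of a
metric into `J Γ(u, v) = Γ̃(J u, J v) + (dJ u) v`. These second derivatives of the coordinate
changes cancel those which appear when `p̃ Jτ = Jσ p` and `Ã Jτ = Jσ A` are differentiated.
-/

section MatrixCalculus

open scoped Matrix Matrix.Norms.Operator

variable {E ι κ μ : Type*} [NormedAddCommGroup E] [NormedSpace ℝ E] {q : E}

lemma matrix_mul_mul_apply_eq_sum {ν : Type*} [Fintype κ] [Fintype μ] (B : Matrix ι κ ℝ)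
    (M : Matrix κ μ ℝ) (C : Matrix μ ν ℝ) (i : ι) (j : ν) :
    (B * M * C) i j = ∑ a, ∑ b, M a b * B i a * C b j := by
  simp only [Matrix.mul_apply, Finset.sum_mul]
  rw [Finset.sum_comm]
  simp only [mul_comm (B i _)]

lemma differentiableAt_matrix_iff [Finite κ] {M : E → Matrix ι κ ℝ} :
    DifferentiableAt ℝ M q ↔ ∀ i j, DifferentiableAt ℝ (fun s => M s i j) q := by
  cases nonempty_fintype κ
  rw [← forall_congr' fun i => differentiableAt_pi]
  exact differentiableAt_pi

lemma fderiv_matrix_apply [Finite κ] {M : E → Matrix ι κ ℝ} (hM : DifferentiableAt ℝ M q)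
    (v : E) (i : ι) (j : κ) : fderiv ℝ M q v i j = fderiv ℝ (fun s => M s i j) q v := by
  cases nonempty_fintype κ
  have hentry := hasFDerivAt_pi'.1 (hasFDerivAt_pi'.1 hM.hasFDerivAt i) j
  exact (congrArg (fun L : E →L[ℝ] ℝ => L v) hentry.fderiv).symm

lemma differentiableAt_matrix_transpose [Finite ι] [Finite κ] {M : E → Matrix ι κ ℝ}
    (hM : DifferentiableAt ℝ M q) : DifferentiableAt ℝ (fun s => (M s)ᵀ) q :=
  differentiableAt_matrix_iff.2 fun i j => differentiableAt_matrix_iff.1 hM j i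

lemma fderiv_matrix_transpose [Finite ι] [Finite κ] {M : E → Matrix ι κ ℝ}
    (hM : DifferentiableAt ℝ M q) (v : E) :
    fderiv ℝ (fun s => (M s)ᵀ) q v = (fderiv ℝ M q v)ᵀ := by
  ext i j
  rw [Matrix.transpose_apply, fderiv_matrix_apply (differentiableAt_matrix_transpose hM),
    fderiv_matrix_apply hM]
  rfl

lemma hasFDerivAt_matrix_mul [Finite ι] [Fintype κ] [Finite μ] {M : E → Matrix ι κ ℝ}
    {N : E → Matrix κ μ ℝ} (hM : DifferentiableAt ℝ M q) (hN : DifferentiableAt ℝ N q) :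
    ∃ L : E →L[ℝ] Matrix ι μ ℝ, HasFDerivAt (fun s => M s * N s) L q ∧
      ∀ v, L v = fderiv ℝ M q v * N q + M q * fderiv ℝ N q v := by
  cases nonempty_fintype ι
  cases nonempty_fintype μ
  let mulMap := (LinearMap.mk₂ ℝ (· * · : Matrix ι κ ℝ → Matrix κ μ ℝ → Matrix ι μ ℝ)
    Matrix.add_mul Matrix.smul_mul Matrix.mul_add
    fun c M N => Matrix.mul_smul M c N).toContinuousBilinearMap
  exact ⟨_, mulMap.hasFDerivAt_of_bilinear hM.hasFDerivAt hN.hasFDerivAt, fun v => add_comm _ _⟩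

lemma differentiableAt_matrix_mul [Finite ι] [Fintype κ] [Finite μ] {M : E → Matrix ι κ ℝ}
    {N : E → Matrix κ μ ℝ} (hM : DifferentiableAt ℝ M q) (hN : DifferentiableAt ℝ N q) :
    DifferentiableAt ℝ (fun s => M s * N s) q :=
  let ⟨_, hL, _⟩ := hasFDerivAt_matrix_mul hM hN
  hL.differentiableAt

lemma fderiv_matrix_mul [Finite ι] [Fintype κ] [Finite μ] {M : E → Matrix ι κ ℝ}
    {N : E → Matrix κ μ ℝ} (hM : DifferentiableAt ℝ M q) (hN : DifferentiableAt ℝ N q) (v : E) :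
    fderiv ℝ (fun s => M s * N s) q v = fderiv ℝ M q v * N q + M q * fderiv ℝ N q v := by
  obtain ⟨L, hL, hLv⟩ := hasFDerivAt_matrix_mul hM hN
  rw [hL.fderiv, hLv]

lemma differentiableAt_matrix_inv [Fintype ι] [DecidableEq ι] {M : E → Matrix ι ι ℝ}
    (hM : DifferentiableAt ℝ M q) (hdet : IsUnit (M q).det) :
    DifferentiableAt ℝ (fun s => (M s)⁻¹) q := by
  simp only [Matrix.nonsing_inv_eq_ringInverse]
  exact hM.inverse ((Matrix.isUnit_iff_isUnit_det _).2 hdet)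

end MatrixCalculus

section Jacobian

open scoped Matrix Topology Matrix.Norms.Operator

variable {k : ℕ} {σ : (Fin k → ℝ) → Fin k → ℝ} {t : Fin k → ℝ}

lemma jacobian_eq_toMatrix' (hσ : DifferentiableAt ℝ σ t) :
    jacobian σ t = LinearMap.toMatrix' (fderiv ℝ σ t).toLinearMap := by
  ext a b
  simp [jacobian, pd, fderiv_apply hσ, LinearMap.toMatrix'_apply]

lemma jacobian_mulVec (hσ : DifferentiableAt ℝ σ t) (v : Fin k → ℝ) :
    jacobian σ t *ᵥ v = fderiv ℝ σ t v := by
  rw [jacobian_eq_toMatrix' hσ, LinearMap.toMatrix'_mulVec, ContinuousLinearMap.coe_coe]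

lemma hasFDerivAt_jacobian (hσ : ContDiffAt ℝ 2 σ t) :
    HasFDerivAt (jacobian σ) ((LinearMap.toMatrix'.toLinearMap ∘ₗ
      ContinuousLinearMap.coeLM ℝ).toContinuousLinearMap ∘L fderiv ℝ (fderiv ℝ σ) t) t := by
  have hdiff : DifferentiableAt ℝ (fderiv ℝ σ) t :=
    (hσ.fderiv_right (m := 1) (by norm_num)).differentiableAt one_ne_zero
  have hev : jacobian σ =ᶠ[𝓝 t] fun s => LinearMap.toMatrix' (fderiv ℝ σ s).toLinearMap := by
    filter_upwards [hσ.eventually (by simp)] with s hs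
    exact jacobian_eq_toMatrix' (hs.differentiableAt two_ne_zero)
  exact ((ContinuousLinearMap.hasFDerivAt _).comp t hdiff.hasFDerivAt).congr_of_eventuallyEq hev

lemma fderiv_jacobian_mulVec_comm (hσ : ContDiffAt ℝ 2 σ t) (u v : Fin k → ℝ) :
    fderiv ℝ (jacobian σ) t u *ᵥ v = fderiv ℝ (jacobian σ) t v *ᵥ u := by
  have hsymm : IsSymmSndFDerivAt ℝ σ t := hσ.isSymmSndFDerivAt (by simp)
  rw [(hasFDerivAt_jacobian hσ).fderiv]
  simpa using hsymm u v

lemma eventually_isUnit_det_jacobian (hσ : ContDiffAt ℝ 2 σ t)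
    (hJ : IsUnit (jacobian σ t).det) : ∀ᶠ s in 𝓝 t, IsUnit (jacobian σ s).det := by
  simp only [isUnit_iff_ne_zero] at hJ ⊢
  exact (continuous_id.matrix_det.continuousAt.comp
    (hasFDerivAt_jacobian hσ).continuousAt).eventually_ne hJ

lemma fderiv_comp_eq_jacobian_mulVec {F : Type*} [NormedAddCommGroup F] [NormedSpace ℝ F]
    {f : (Fin k → ℝ) → F} (hf : DifferentiableAt ℝ f (σ t)) (hσ : DifferentiableAt ℝ σ t)
    (v : Fin k → ℝ) :
    fderiv ℝ (fun s => f (σ s)) t v = fderiv ℝ f (σ t) (jacobian σ t *ᵥ v) := by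
  rw [jacobian_mulVec hσ, fderiv_fun_comp t hf hσ, ContinuousLinearMap.comp_apply]

end Jacobian

section Christoffel

open scoped Matrix Topology

variable {k : ℕ} {g : (Fin k → ℝ) → Matrix (Fin k) (Fin k) ℝ} {t : Fin k → ℝ}

/-- The Christoffel symbols as a bilinear map `Γ_t(u, v)^a = χ^a_{bc} u^b v^c`. -/
def christoffelMap (g : (Fin k → ℝ) → Matrix (Fin k) (Fin k) ℝ) (t u v : Fin k → ℝ) :
    Fin k → ℝ :=
  fun a => ∑ b, ∑ c, christoffel g a b c t * u b * v c

lemma sum_mul_christoffel (hinv : IsUnit (g t).det) (b c d : Fin k) :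
    ∑ a, g t d a * christoffel g a b c t = (1 / 2) *
      (pd (fun s => g s d c) b t + pd (fun s => g s b d) c t - pd (fun s => g s b c) d t) := by
  set S : Fin k → ℝ := fun d =>
    pd (fun s => g s d c) b t + pd (fun s => g s b d) c t - pd (fun s => g s b c) d t
  calc ∑ a, g t d a * christoffel g a b c t = (g t *ᵥ (1 / 2 : ℝ) • (g t)⁻¹ *ᵥ S) d := rfl
    _ = (1 / 2) * S d := by
      rw [Matrix.mulVec_smul, Matrix.mulVec_mulVec, Matrix.mul_nonsing_inv _ hinv,
        Matrix.one_mulVec, Pi.smul_apply, smul_eq_mul]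

lemma fderiv_eq_sum_pd (f : (Fin k → ℝ) → ℝ) (t v : Fin k → ℝ) :
    fderiv ℝ f t v = ∑ a, v a * pd f a t := by
  conv_lhs => rw [pi_eq_sum_univ' v]
  simp [pd]

lemma dotProduct_fderiv_mulVec (hg : DifferentiableAt ℝ g t) (u v w : Fin k → ℝ) :
    u ⬝ᵥ fderiv ℝ g t w *ᵥ v = ∑ i, ∑ l, ∑ j, u i * w l * v j * pd (fun s => g s i j) l t := by
  simp only [dotProduct, Matrix.mulVec, fderiv_matrix_apply hg, fderiv_eq_sum_pd,
    Finset.mul_sum, Finset.sum_mul]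
  refine Finset.sum_congr rfl fun i _ => ?_
  rw [Finset.sum_comm]
  exact Finset.sum_congr rfl fun l _ => Finset.sum_congr rfl fun j _ => by ring

lemma koszul_formula (hg : DifferentiableAt ℝ g t) (hinv : IsUnit (g t).det)
    (u v w : Fin k → ℝ) :
    2 * (w ⬝ᵥ g t *ᵥ christoffelMap g t u v) =
      w ⬝ᵥ fderiv ℝ g t u *ᵥ v + u ⬝ᵥ fderiv ℝ g t v *ᵥ w - u ⬝ᵥ fderiv ℝ g t w *ᵥ v := by
  have hlower : 2 * (w ⬝ᵥ g t *ᵥ christoffelMap g t u v) =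
      ∑ d, ∑ b, ∑ c, w d * u b * v c * (2 * ∑ a, g t d a * christoffel g a b c t) := by
    simp only [dotProduct, Matrix.mulVec, christoffelMap, Finset.mul_sum]
    refine Finset.sum_congr rfl fun d _ => ?_
    rw [← Finset.sum_comm_cycle]
    exact Finset.sum_congr rfl fun b _ => Finset.sum_congr rfl fun c _ =>
      Finset.sum_congr rfl fun a _ => by ring
  have hcycle : u ⬝ᵥ fderiv ℝ g t v *ᵥ w =
      ∑ d, ∑ b, ∑ c, u b * v c * w d * pd (fun s => g s b d) c t := by
    rw [dotProduct_fderiv_mulVec hg, Finset.sum_comm_cycle]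
  have hswap : u ⬝ᵥ fderiv ℝ g t w *ᵥ v =
      ∑ d, ∑ b, ∑ c, u b * w d * v c * pd (fun s => g s b c) d t := by
    rw [dotProduct_fderiv_mulVec hg, Finset.sum_comm]
  rw [hlower, hcycle, hswap, dotProduct_fderiv_mulVec hg]
  simp only [sum_mul_christoffel hinv, ← Finset.sum_add_distrib, ← Finset.sum_sub_distrib]
  refine Finset.sum_congr rfl fun d _ => Finset.sum_congr rfl fun b _ =>
    Finset.sum_congr rfl fun c _ => by ring

end Christoffel

section MetricPullback

open scoped Matrix Topology Matrix.Norms.Operator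

variable {k : ℕ} {σ : (Fin k → ℝ) → Fin k → ℝ} {g gtil : (Fin k → ℝ) → Matrix (Fin k) (Fin k) ℝ}
  {t : Fin k → ℝ}

/-- Near `t`, the map `σ` is a `C²` change of coordinates carrying the semi-Riemannian metric `g`
to `gtil`. The tensor law is kept in the pullback form `g = Jᵀ (gtil ∘ σ) J`, in which no inverse
Jacobian has to be differentiated. -/
structure IsMetricPullbackAt (σ : (Fin k → ℝ) → Fin k → ℝ)
    (g gtil : (Fin k → ℝ) → Matrix (Fin k) (Fin k) ℝ) (t : Fin k → ℝ) : Prop where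
  contDiffAt : ContDiffAt ℝ 2 σ t
  isSymm : (g t).IsSymm
  isUnit_det : IsUnit (g t).det
  differentiableAt : DifferentiableAt ℝ gtil (σ t)
  eventually_eq : ∀ᶠ s in 𝓝 t, g s = (jacobian σ s)ᵀ * gtil (σ s) * jacobian σ s

namespace IsMetricPullbackAt

lemma of_tensor_law {T Ttil : Set (Fin k → ℝ)} (hT : IsOpen T) (hTtil : IsOpen Ttil)
    (hσ : ContDiffOn ℝ 2 σ T) (hmaps : Set.MapsTo σ T Ttil)
    (hJ : ∀ s ∈ T, IsUnit (jacobian σ s).det)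
    (hgtil : ∀ a b, DifferentiableOn ℝ (fun s => gtil s a b) Ttil)
    (hlaw : ∀ s ∈ T, ∀ atil btil, gtil (σ s) atil btil =
      ∑ a, ∑ b, g s a b * (jacobian σ s)⁻¹ a atil * (jacobian σ s)⁻¹ b btil)
    (ht : t ∈ T) (hsymm : (g t).IsSymm) (hdet : IsUnit (g t).det) :
    IsMetricPullbackAt σ g gtil t where
  contDiffAt := hσ.contDiffAt (hT.mem_nhds ht)
  isSymm := hsymm
  isUnit_det := hdet
  differentiableAt := differentiableAt_matrix_iff.2 fun a b =>
    (hgtil a b).differentiableAt (hTtil.mem_nhds (hmaps ht))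
  eventually_eq := by
    filter_upwards [hT.mem_nhds ht] with s hs
    have hpush : gtil (σ s) = ((jacobian σ s)⁻¹)ᵀ * g s * (jacobian σ s)⁻¹ := by
      ext a b
      rw [hlaw s hs, matrix_mul_mul_apply_eq_sum]
      rfl
    rw [hpush, Matrix.mul_assoc _ _ (jacobian σ s),
      Matrix.nonsing_inv_mul_cancel_right _ _ (hJ s hs), ← Matrix.mul_assoc,
      ← Matrix.transpose_mul, Matrix.nonsing_inv_mul _ (hJ s hs), Matrix.transpose_one,
      Matrix.one_mul]

lemma map_differentiableAt (h : IsMetricPullbackAt σ g gtil t) : DifferentiableAt ℝ σ t :=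
  h.contDiffAt.differentiableAt two_ne_zero

lemma differentiableAt_jacobian (h : IsMetricPullbackAt σ g gtil t) :
    DifferentiableAt ℝ (jacobian σ) t :=
  (hasFDerivAt_jacobian h.contDiffAt).differentiableAt

lemma isUnit_det_target_and_jacobian (h : IsMetricPullbackAt σ g gtil t) :
    IsUnit (gtil (σ t)).det ∧ IsUnit (jacobian σ t).det := by
  have hdet := h.isUnit_det
  rw [h.eventually_eq.self_of_nhds, Matrix.det_mul, Matrix.det_mul, IsUnit.mul_iff,
    IsUnit.mul_iff] at hdet
  exact ⟨hdet.1.2, hdet.2⟩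

lemma isSymm_target (h : IsMetricPullbackAt σ g gtil t) : (gtil (σ t)).IsSymm := by
  have hJ := (Matrix.isUnit_iff_isUnit_det _).2 h.isUnit_det_target_and_jacobian.2
  have hpull := h.eventually_eq.self_of_nhds
  have hsymm := h.isSymm
  rw [Matrix.IsSymm, hpull, Matrix.transpose_mul, Matrix.transpose_mul, Matrix.transpose_transpose,
    ← Matrix.mul_assoc] at hsymm
  exact ((Matrix.isUnit_transpose _).2 hJ).mul_left_cancel (hJ.mul_right_cancel hsymm)

lemma differentiableAt_and_fderiv (h : IsMetricPullbackAt σ g gtil t) :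
    DifferentiableAt ℝ g t ∧ ∀ w, fderiv ℝ g t w =
      (fderiv ℝ (jacobian σ) t w)ᵀ * gtil (σ t) * jacobian σ t
      + (jacobian σ t)ᵀ * fderiv ℝ gtil (σ t) (jacobian σ t *ᵥ w) * jacobian σ t
      + (jacobian σ t)ᵀ * gtil (σ t) * fderiv ℝ (jacobian σ) t w := by
  have hJ := h.differentiableAt_jacobian
  have hJT := differentiableAt_matrix_transpose hJ
  have hcomp : DifferentiableAt ℝ (fun s => gtil (σ s)) t :=
    h.differentiableAt.comp t h.map_differentiableAt
  have hprod := differentiableAt_matrix_mul hJT hcomp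
  have hchain : ∀ w, fderiv ℝ (fun s => gtil (σ s)) t w =
      fderiv ℝ gtil (σ t) (jacobian σ t *ᵥ w) :=
    fderiv_comp_eq_jacobian_mulVec h.differentiableAt h.map_differentiableAt
  refine ⟨(differentiableAt_matrix_mul hprod hJ).congr_of_eventuallyEq h.eventually_eq, fun w => ?_⟩
  rw [Filter.EventuallyEq.fderiv_eq h.eventually_eq, fderiv_matrix_mul hprod hJ,
    fderiv_matrix_mul hJT hcomp, fderiv_matrix_transpose hJ, hchain,
    Matrix.add_mul]

lemma dotProduct_fderiv_mulVec (h : IsMetricPullbackAt σ g gtil t) (u v w : Fin k → ℝ) :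
    u ⬝ᵥ fderiv ℝ g t w *ᵥ v =
      (fderiv ℝ (jacobian σ) t w *ᵥ u) ⬝ᵥ gtil (σ t) *ᵥ (jacobian σ t *ᵥ v)
      + (jacobian σ t *ᵥ u) ⬝ᵥ
          fderiv ℝ gtil (σ t) (jacobian σ t *ᵥ w) *ᵥ (jacobian σ t *ᵥ v)
      + (jacobian σ t *ᵥ u) ⬝ᵥ gtil (σ t) *ᵥ (fderiv ℝ (jacobian σ) t w *ᵥ v) := by
  simp only [h.differentiableAt_and_fderiv.2 w, Matrix.add_mulVec, dotProduct_add,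
    ← Matrix.mulVec_mulVec, Matrix.dotProduct_mulVec _ (_ᵀ), Matrix.vecMul_transpose]

theorem jacobian_mulVec_christoffelMap (h : IsMetricPullbackAt σ g gtil t) (u v : Fin k → ℝ) :
    jacobian σ t *ᵥ christoffelMap g t u v =
      christoffelMap gtil (σ t) (jacobian σ t *ᵥ u) (jacobian σ t *ᵥ v)
      + fderiv ℝ (jacobian σ) t u *ᵥ v := by
  obtain ⟨hdet, hdetJ⟩ := h.isUnit_det_target_and_jacobian
  set J := jacobian σ t
  set H := fderiv ℝ (jacobian σ) t
  set G := gtil (σ t)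
  have hH : ∀ a b, H a *ᵥ b = H b *ᵥ a := fderiv_jacobian_mulVec_comm h.contDiffAt
  have hG : ∀ a b, a ⬝ᵥ G *ᵥ b = b ⬝ᵥ G *ᵥ a := fun a b => by
    rw [Matrix.dotProduct_mulVec, ← Matrix.mulVec_transpose, h.isSymm_target, dotProduct_comm]
  have hpair : ∀ w, w ⬝ᵥ (Jᵀ * G) *ᵥ (J *ᵥ christoffelMap g t u v) =
      w ⬝ᵥ (Jᵀ * G) *ᵥ (christoffelMap gtil (σ t) (J *ᵥ u) (J *ᵥ v) + H u *ᵥ v) := by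
    intro w
    have hsource := koszul_formula h.differentiableAt_and_fderiv.1 h.isUnit_det u v w
    have htarget := koszul_formula h.differentiableAt hdet (J *ᵥ u) (J *ᵥ v) (J *ᵥ w)
    simp only [h.eventually_eq.self_of_nhds, h.dotProduct_fderiv_mulVec] at hsource
    simp only [← Matrix.mulVec_mulVec, Matrix.dotProduct_mulVec _ (_ᵀ),
      Matrix.vecMul_transpose, Matrix.mulVec_add, dotProduct_add] at hsource ⊢
    rw [hH v u, hH u w, hH v w, hG _ (J *ᵥ v), hG _ (J *ᵥ w)] at hsource
    linear_combination (1 / 2) * hsource - (1 / 2) * htarget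
  have hunit : IsUnit (Jᵀ * G) := by
    rw [Matrix.isUnit_iff_isUnit_det, Matrix.det_mul, Matrix.det_transpose]
    exact hdetJ.mul hdet
  exact Matrix.mulVec_injective_of_isUnit hunit (dotProduct_eq _ _ fun w => by
    simpa only [dotProduct_comm] using hpair w)

end IsMetricPullbackAt

end MetricPullback

section DualJet

open scoped Matrix Topology Matrix.Norms.Operator

variable {m n : ℕ} {σ : (Fin m → ℝ) → Fin m → ℝ} {τ : (Fin n → ℝ) → Fin n → ℝ}
  {q : Jet m n}

/-- The change of coordinates `(t, x, p) ↦ (t̃, x̃, p̃)` of the dual 1-jet space induced by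
`t̃ = σ t` and `x̃ = τ x`. -/
def dualJetMap (σ : (Fin m → ℝ) → Fin m → ℝ) (τ : (Fin n → ℝ) → Fin n → ℝ) (q : Jet m n) :
    Jet m n :=
  (σ q.1, τ q.2.1, fun atil itil =>
    ∑ a, ∑ i, q.2.2 a i * jacobian σ q.1 atil a * (jacobian τ q.2.1)⁻¹ i itil)

/-- The polymomenta `p^a_i` of a point of the dual 1-jet space, or their components `dp^a_i` in a
tangent vector, as an `m × n` matrix. -/
def polymomenta {m n : ℕ} : Jet m n →L[ℝ] Matrix (Fin m) (Fin n) ℝ :=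
  ContinuousLinearMap.snd ℝ (Fin n → ℝ) (Fin m → Fin n → ℝ) ∘L ContinuousLinearMap.snd ℝ _ _

lemma polymomenta_apply (q : Jet m n) (a : Fin m) (i : Fin n) :
    polymomenta q a i = q.2.2 a i :=
  rfl

lemma polymomenta_dualJetMap (σ : (Fin m → ℝ) → Fin m → ℝ) (τ : (Fin n → ℝ) → Fin n → ℝ)
    (q : Jet m n) :
    polymomenta (dualJetMap σ τ q) =
      jacobian σ q.1 * polymomenta q * (jacobian τ q.2.1)⁻¹ := by
  ext a i
  rw [matrix_mul_mul_apply_eq_sum]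
  rfl

lemma hasFDerivAt_jacobian_comp_fst (hσ : ContDiffAt ℝ 2 σ q.1) :
    HasFDerivAt (fun q : Jet m n => jacobian σ q.1)
      (fderiv ℝ (jacobian σ) q.1 ∘L ContinuousLinearMap.fst ℝ _ _) q :=
  (hasFDerivAt_jacobian hσ).differentiableAt.hasFDerivAt.comp q hasFDerivAt_fst

lemma hasFDerivAt_jacobian_comp_snd_fst (hτ : ContDiffAt ℝ 2 τ q.2.1) :
    HasFDerivAt (fun q : Jet m n => jacobian τ q.2.1)
      (fderiv ℝ (jacobian τ) q.2.1 ∘L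
        ContinuousLinearMap.fst ℝ _ _ ∘L ContinuousLinearMap.snd ℝ _ _) q :=
  HasFDerivAt.comp (f := fun q : Jet m n => q.2.1) q
    (hasFDerivAt_jacobian hτ).differentiableAt.hasFDerivAt
    (hasFDerivAt_fst.comp q hasFDerivAt_snd)

lemma differentiableAt_dualJetMap (hσ : ContDiffAt ℝ 2 σ q.1) (hτ : ContDiffAt ℝ 2 τ q.2.1)
    (hJτ : IsUnit (jacobian τ q.2.1).det) : DifferentiableAt ℝ (dualJetMap σ τ) q := by
  have hJτinv : DifferentiableAt ℝ (fun q : Jet m n => (jacobian τ q.2.1)⁻¹) q :=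
    differentiableAt_matrix_inv (hasFDerivAt_jacobian_comp_snd_fst hτ).differentiableAt hJτ
  have hptil : DifferentiableAt ℝ (fun q => polymomenta (dualJetMap σ τ q)) q := by
    simp only [polymomenta_dualJetMap]
    exact differentiableAt_matrix_mul (differentiableAt_matrix_mul
      (hasFDerivAt_jacobian_comp_fst hσ).differentiableAt
      polymomenta.differentiableAt) hJτinv
  have hσt : DifferentiableAt ℝ (fun q : Jet m n => σ q.1) q :=
    (hσ.differentiableAt two_ne_zero).comp q differentiableAt_fst
  have hτx : DifferentiableAt ℝ (fun q : Jet m n => τ q.2.1) q :=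
    DifferentiableAt.comp (f := fun q : Jet m n => q.2.1) q (hτ.differentiableAt two_ne_zero)
      (by fun_prop)
  exact hσt.prodMk (hτx.prodMk hptil)

lemma fderiv_dualJetMap_fst (hσ : DifferentiableAt ℝ σ q.1)
    (hdiff : DifferentiableAt ℝ (dualJetMap σ τ) q) (V : Jet m n) :
    (fderiv ℝ (dualJetMap σ τ) q V).1 = jacobian σ q.1 *ᵥ V.1 := by
  have hcomp := (hasFDerivAt_fst.comp q hdiff.hasFDerivAt).unique
    (hσ.hasFDerivAt.comp q hasFDerivAt_fst)
  rw [jacobian_mulVec hσ]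
  exact congr($hcomp V)

lemma fderiv_dualJetMap_snd_fst (hτ : DifferentiableAt ℝ τ q.2.1)
    (hdiff : DifferentiableAt ℝ (dualJetMap σ τ) q) (V : Jet m n) :
    (fderiv ℝ (dualJetMap σ τ) q V).2.1 = jacobian τ q.2.1 *ᵥ V.2.1 := by
  have hcomp := (hasFDerivAt_fst.comp q (hasFDerivAt_snd.comp q hdiff.hasFDerivAt)).unique
    (HasFDerivAt.comp (f := fun q : Jet m n => q.2.1) q hτ.hasFDerivAt
      (hasFDerivAt_fst.comp q hasFDerivAt_snd))
  rw [jacobian_mulVec hτ]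
  exact congr($hcomp V)

lemma polymomenta_fderiv_dualJetMap (hσ : ContDiffAt ℝ 2 σ q.1) (hτ : ContDiffAt ℝ 2 τ q.2.1)
    (hJτ : IsUnit (jacobian τ q.2.1).det) (V : Jet m n) :
    polymomenta (fderiv ℝ (dualJetMap σ τ) q V) * jacobian τ q.2.1
        + polymomenta (dualJetMap σ τ q) * fderiv ℝ (jacobian τ) q.2.1 V.2.1 =
      fderiv ℝ (jacobian σ) q.1 V.1 * polymomenta q + jacobian σ q.1 * polymomenta V := by
  have hptil : HasFDerivAt (fun y => polymomenta (dualJetMap σ τ y))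
      (polymomenta ∘L fderiv ℝ (dualJetMap σ τ) q) q :=
    polymomenta.hasFDerivAt.comp q (differentiableAt_dualJetMap hσ hτ hJτ).hasFDerivAt
  have hp : HasFDerivAt (fun y : Jet m n => polymomenta y) polymomenta q :=
    polymomenta.hasFDerivAt
  have hJσq := hasFDerivAt_jacobian_comp_fst hσ
  have hJτq := hasFDerivAt_jacobian_comp_snd_fst hτ
  have hunit : ∀ᶠ y : Jet m n in 𝓝 q, IsUnit (jacobian τ y.2.1).det :=
    continuous_snd.fst.continuousAt.eventually (eventually_isUnit_det_jacobian hτ hJτ)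
  have hlaw : (fun y => polymomenta (dualJetMap σ τ y) * jacobian τ y.2.1) =ᶠ[𝓝 q]
      fun y => jacobian σ y.1 * polymomenta y := by
    filter_upwards [hunit] with y hy
    rw [polymomenta_dualJetMap, Matrix.nonsing_inv_mul_cancel_right _ _ hy]
  have hderiv := DFunLike.congr_fun (hlaw.fderiv_eq (𝕜 := ℝ)) V
  rw [fderiv_matrix_mul hptil.differentiableAt hJτq.differentiableAt,
    fderiv_matrix_mul hJσq.differentiableAt hp.differentiableAt,
    hptil.fderiv, hJτq.fderiv, hp.fderiv, hJσq.fderiv] at hderiv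
  exact hderiv

/-- The covariant differential `dp^a_i + χ^a_{bf} p^f_i dt^b − γ^r_{ij} p^a_r dx^j` of the
polymomenta at `q`, evaluated on the tangent vector `V` and contracted with `u^i`. -/
def momentumCovDeriv (h : (Fin m → ℝ) → Matrix (Fin m) (Fin m) ℝ)
    (φ : (Fin n → ℝ) → Matrix (Fin n) (Fin n) ℝ) (q V : Jet m n) (u : Fin n → ℝ) :
    Fin m → ℝ :=
  polymomenta V *ᵥ u + christoffelMap h q.1 V.1 (polymomenta q *ᵥ u)
    - polymomenta q *ᵥ christoffelMap φ q.2.1 u V.2.1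

theorem momentumCovDeriv_dualJetMap {h htil : (Fin m → ℝ) → Matrix (Fin m) (Fin m) ℝ}
    {φ φtil : (Fin n → ℝ) → Matrix (Fin n) (Fin n) ℝ} (hσ : IsMetricPullbackAt σ h htil q.1)
    (hτ : IsMetricPullbackAt τ φ φtil q.2.1) (V : Jet m n) (u : Fin n → ℝ) :
    momentumCovDeriv htil φtil (dualJetMap σ τ q) (fderiv ℝ (dualJetMap σ τ) q V)
        (jacobian τ q.2.1 *ᵥ u) =
      jacobian σ q.1 *ᵥ momentumCovDeriv h φ q V u := by
  obtain ⟨-, hJτ⟩ := hτ.isUnit_det_target_and_jacobian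
  have hdual := differentiableAt_dualJetMap hσ.contDiffAt hτ.contDiffAt hJτ
  have ht : (dualJetMap σ τ q).1 = σ q.1 := rfl
  have hx : (dualJetMap σ τ q).2.1 = τ q.2.1 := rfl
  have hp : ∀ w, polymomenta (dualJetMap σ τ q) *ᵥ jacobian τ q.2.1 *ᵥ w =
      jacobian σ q.1 *ᵥ polymomenta q *ᵥ w := fun w => by
    rw [polymomenta_dualJetMap, Matrix.mulVec_mulVec, Matrix.mulVec_mulVec,
      Matrix.nonsing_inv_mul_cancel_right _ _ hJτ]
  have hdp := congr($(polymomenta_fderiv_dualJetMap hσ.contDiffAt hτ.contDiffAt hJτ V) *ᵥ u)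
  have hΓh := hσ.jacobian_mulVec_christoffelMap V.1 (polymomenta q *ᵥ u)
  have hΓφ := hp (christoffelMap φ q.2.1 u V.2.1)
  simp only [Matrix.add_mulVec, ← Matrix.mulVec_mulVec] at hdp
  rw [hτ.jacobian_mulVec_christoffelMap, Matrix.mulVec_add,
    fderiv_jacobian_mulVec_comm hτ.contDiffAt u] at hΓφ
  rw [momentumCovDeriv, momentumCovDeriv, fderiv_dualJetMap_fst hσ.map_differentiableAt hdual,
    fderiv_dualJetMap_snd_fst hτ.map_differentiableAt hdual, ht, hx, hp, Matrix.mulVec_sub,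
    Matrix.mulVec_add]
  linear_combination (norm := module) hdp - hΓh - hΓφ

end DualJet

section Potential

open scoped Matrix Topology Matrix.Norms.Operator

variable {m n : ℕ} {A Atil : Fin m → Fin n → (Fin m → ℝ) × (Fin n → ℝ) → ℝ}
  {τ : (Fin n → ℝ) → Fin n → ℝ} {J : Matrix (Fin m) (Fin m) ℝ} {t ttil : Fin m → ℝ}
  {x : Fin n → ℝ}

/-- The potentials `A^{(a)}_{(i)}` at a point of `T × X` as an `m × n` matrix. -/
def potentialMatrix (A : Fin m → Fin n → (Fin m → ℝ) × (Fin n → ℝ) → ℝ)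
    (y : (Fin m → ℝ) × (Fin n → ℝ)) : Matrix (Fin m) (Fin n) ℝ :=
  Matrix.of fun a i => A a i y

lemma potentialMatrix_mul_of_tensor_law {K : Matrix (Fin n) (Fin n) ℝ} (hK : IsUnit K.det)
    {y ytil : (Fin m → ℝ) × (Fin n → ℝ)}
    (hlaw : ∀ atil itil, Atil atil itil ytil =
      ∑ a, ∑ i, A a i y * J atil a * K⁻¹ i itil) :
    potentialMatrix Atil ytil * K = J * potentialMatrix A y := by
  have hpush : potentialMatrix Atil ytil = J * potentialMatrix A y * K⁻¹ := by
    ext a i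
    rw [matrix_mul_mul_apply_eq_sum]
    exact hlaw a i
  rw [hpush, Matrix.nonsing_inv_mul_cancel_right _ _ hK]

lemma hasFDerivAt_potentialMatrix_right
    (hA : DifferentiableAt ℝ (potentialMatrix A) (t, x)) :
    HasFDerivAt (fun y => potentialMatrix A (t, y))
      (fderiv ℝ (potentialMatrix A) (t, x) ∘L ContinuousLinearMap.inr ℝ _ _) x :=
  hA.hasFDerivAt.comp x (hasFDerivAt_prodMk_right t x)

lemma fderiv_potentialMatrix_law (hτ : ContDiffAt ℝ 2 τ x)
    (hA : DifferentiableAt ℝ (potentialMatrix A) (t, x))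
    (hAtil : DifferentiableAt ℝ (potentialMatrix Atil) (ttil, τ x))
    (hlaw : ∀ᶠ y in 𝓝 x,
      potentialMatrix Atil (ttil, τ y) * jacobian τ y = J * potentialMatrix A (t, y))
    (u : Fin n → ℝ) :
    fderiv ℝ (potentialMatrix Atil) (ttil, τ x) (0, jacobian τ x *ᵥ u) * jacobian τ x
        + potentialMatrix Atil (ttil, τ x) * fderiv ℝ (jacobian τ) x u =
      J * fderiv ℝ (potentialMatrix A) (t, x) (0, u) := by
  have hτx := hτ.differentiableAt two_ne_zero
  have hJτ := (hasFDerivAt_jacobian hτ).differentiableAt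
  have hAx := hasFDerivAt_potentialMatrix_right hA
  have hAtilx : HasFDerivAt (fun y => potentialMatrix Atil (ttil, τ y))
      ((fderiv ℝ (potentialMatrix Atil) (ttil, τ x) ∘L ContinuousLinearMap.inr ℝ _ _) ∘L
        fderiv ℝ τ x) x :=
    (hasFDerivAt_potentialMatrix_right hAtil).comp x hτx.hasFDerivAt
  have hderiv := DFunLike.congr_fun (Filter.EventuallyEq.fderiv_eq (𝕜 := ℝ) hlaw) u
  rw [fderiv_matrix_mul hAtilx.differentiableAt hJτ,
    fderiv_matrix_mul (differentiableAt_const J) hAx.differentiableAt, hAx.fderiv,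
    hAtilx.fderiv, fderiv_fun_const] at hderiv
  rw [jacobian_mulVec hτx]
  simpa using hderiv

/-- The symmetrized spatial covariant derivative
`∂A^{(a)}_{(i)}/∂x^j + ∂A^{(a)}_{(j)}/∂x^i − 2 γ^r_{ij} A^{(a)}_{(r)}` of the potentials,
contracted with `u^i v^j`. -/
def symmCovDeriv (φ : (Fin n → ℝ) → Matrix (Fin n) (Fin n) ℝ)
    (A : Fin m → Fin n → (Fin m → ℝ) × (Fin n → ℝ) → ℝ) (y : (Fin m → ℝ) × (Fin n → ℝ))
    (u v : Fin n → ℝ) : Fin m → ℝ :=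
  fderiv ℝ (potentialMatrix A) y (0, v) *ᵥ u + fderiv ℝ (potentialMatrix A) y (0, u) *ᵥ v
    - (2 : ℝ) • potentialMatrix A y *ᵥ christoffelMap φ y.2 u v

theorem symmCovDeriv_jacobian_mulVec {φ φtil : (Fin n → ℝ) → Matrix (Fin n) (Fin n) ℝ}
    (hτ : IsMetricPullbackAt τ φ φtil x)
    (hA : DifferentiableAt ℝ (potentialMatrix A) (t, x))
    (hAtil : DifferentiableAt ℝ (potentialMatrix Atil) (ttil, τ x))
    (hlaw : ∀ᶠ y in 𝓝 x,
      potentialMatrix Atil (ttil, τ y) * jacobian τ y = J * potentialMatrix A (t, y))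
    (u v : Fin n → ℝ) :
    symmCovDeriv φtil Atil (ttil, τ x) (jacobian τ x *ᵥ u) (jacobian τ x *ᵥ v) =
      J *ᵥ symmCovDeriv φ A (t, x) u v := by
  have hA₀ := congr($(hlaw.self_of_nhds) *ᵥ christoffelMap φ x u v)
  have hdA := fderiv_potentialMatrix_law hτ.contDiffAt hA hAtil hlaw
  have hdAv := congr($(hdA v) *ᵥ u)
  have hdAu := congr($(hdA u) *ᵥ v)
  rw [Matrix.add_mulVec, ← Matrix.mulVec_mulVec, ← Matrix.mulVec_mulVec,
    ← Matrix.mulVec_mulVec] at hdAv hdAu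
  rw [fderiv_jacobian_mulVec_comm hτ.contDiffAt v u] at hdAv
  rw [← Matrix.mulVec_mulVec, ← Matrix.mulVec_mulVec, hτ.jacobian_mulVec_christoffelMap,
    Matrix.mulVec_add] at hA₀
  simp only [symmCovDeriv, Matrix.mulVec_add, Matrix.mulVec_sub, Matrix.mulVec_smul]
  linear_combination (norm := module) hdAv + hdAu - (2 : ℝ) • hA₀

end Potential

section NonlinearConnection

open scoped Matrix Topology

variable {m n : ℕ} {σ : (Fin m → ℝ) → Fin m → ℝ} {τ : (Fin n → ℝ) → Fin n → ℝ}
  {h htil : (Fin m → ℝ) → Matrix (Fin m) (Fin m) ℝ}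
  {φ φtil : (Fin n → ℝ) → Matrix (Fin n) (Fin n) ℝ}
  {A Atil : Fin m → Fin n → (Fin m → ℝ) × (Fin n → ℝ) → ℝ} {q : Jet m n}

lemma sum_N1_mul (h : (Fin m → ℝ) → Matrix (Fin m) (Fin m) ℝ) (q : Jet m n) (v : Fin m → ℝ)
    (u : Fin n → ℝ) (a : Fin m) :
    ∑ i, (∑ b, N1 h a i b q * v b) * u i = christoffelMap h q.1 v (polymomenta q *ᵥ u) a := by
  simp only [N1, christoffelMap, Matrix.mulVec, dotProduct, polymomenta_apply, Finset.sum_mul,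
    Finset.mul_sum]
  rw [← Finset.sum_comm_cycle]
  exact Finset.sum_congr rfl fun b _ => Finset.sum_congr rfl fun f _ =>
    Finset.sum_congr rfl fun i _ => by ring

lemma fderiv_zero_prod_eq_sum_pdx (f : (Fin m → ℝ) × (Fin n → ℝ) → ℝ)
    (y : (Fin m → ℝ) × (Fin n → ℝ)) (v : Fin n → ℝ) :
    fderiv ℝ f y (0, v) = ∑ j, v j * pdx f j y := by
  change (fderiv ℝ f y ∘L ContinuousLinearMap.inr ℝ (Fin m → ℝ) (Fin n → ℝ)) v = _
  conv_lhs => rw [pi_eq_sum_univ' v]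
  simp [pdx]

lemma sum_N2_mul (hA : DifferentiableAt ℝ (potentialMatrix A) (q.1, q.2.1)) (e m₀ : ℝ)
    (u v : Fin n → ℝ) (a : Fin m) :
    ∑ i, (∑ j, N2 φ A e m₀ a i j q * v j) * u i =
      -(polymomenta q *ᵥ christoffelMap φ q.2.1 u v) a
        - (e / m₀) * symmCovDeriv φ A (q.1, q.2.1) u v a := by
  have hpd (w w' : Fin n → ℝ) : (fderiv ℝ (potentialMatrix A) (q.1, q.2.1) (0, w) *ᵥ w') a =
      ∑ i, ∑ j, w j * pdx (A a i) j (q.1, q.2.1) * w' i := by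
    simp only [Matrix.mulVec, dotProduct, fderiv_matrix_apply hA, fderiv_zero_prod_eq_sum_pdx,
      Finset.sum_mul]
    rfl
  have hΓ : (((2 * e / m₀) • potentialMatrix A (q.1, q.2.1) - polymomenta q) *ᵥ
      christoffelMap φ q.2.1 u v) a = ∑ i, ∑ j, ∑ r, christoffel φ r i j q.2.1 *
        ((2 * e / m₀) * A a r (q.1, q.2.1) - q.2.2 a r) * v j * u i := by
    simp only [Matrix.mulVec, dotProduct, christoffelMap, Finset.mul_sum, Matrix.sub_apply,
      Matrix.smul_apply, smul_eq_mul, polymomenta_apply, potentialMatrix, Matrix.of_apply]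
    rw [← Finset.sum_comm_cycle]
    exact Finset.sum_congr rfl fun i _ => Finset.sum_congr rfl fun j _ =>
      Finset.sum_congr rfl fun r _ => by ring
  rw [Matrix.sub_mulVec, Matrix.smul_mulVec, Pi.sub_apply, Pi.smul_apply, smul_eq_mul] at hΓ
  have hsum : ∑ i, (∑ j, N2 φ A e m₀ a i j q * v j) * u i =
      (∑ i, ∑ j, ∑ r, christoffel φ r i j q.2.1 *
        ((2 * e / m₀) * A a r (q.1, q.2.1) - q.2.2 a r) * v j * u i)
      - (e / m₀) * (∑ i, ∑ j, v j * pdx (A a i) j (q.1, q.2.1) * u i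
        + ∑ i, ∑ j, u i * pdx (A a j) i (q.1, q.2.1) * v j) := by
    simp only [N2, Finset.mul_sum, Finset.sum_mul, ← Finset.sum_add_distrib,
      ← Finset.sum_sub_distrib, sub_mul]
    exact Finset.sum_congr rfl fun i _ => Finset.sum_congr rfl fun j _ => by ring
  have hswap : ∑ i, ∑ j, u i * pdx (A a j) i (q.1, q.2.1) * v j =
      ∑ j, ∑ i, u i * pdx (A a j) i (q.1, q.2.1) * v j := Finset.sum_comm
  rw [hsum, ← hΓ, ← hpd v u, hswap, ← hpd u v, symmCovDeriv]
  simp only [Pi.sub_apply, Pi.add_apply, Pi.smul_apply, smul_eq_mul]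
  ring

/-- The 1-forms `δp^a_i` at `q`, evaluated on the tangent vector `V`, as an `m × n` matrix. -/
def deltaPMatrix (h : (Fin m → ℝ) → Matrix (Fin m) (Fin m) ℝ)
    (φ : (Fin n → ℝ) → Matrix (Fin n) (Fin n) ℝ)
    (A : Fin m → Fin n → (Fin m → ℝ) × (Fin n → ℝ) → ℝ) (e m₀ : ℝ) (q V : Jet m n) :
    Matrix (Fin m) (Fin n) ℝ :=
  Matrix.of fun a i => deltaPform h φ A e m₀ a i q V

theorem deltaPMatrix_mulVec (h : (Fin m → ℝ) → Matrix (Fin m) (Fin m) ℝ)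
    (hA : DifferentiableAt ℝ (potentialMatrix A) (q.1, q.2.1)) (e m₀ : ℝ) (V : Jet m n)
    (u : Fin n → ℝ) :
    deltaPMatrix h φ A e m₀ q V *ᵥ u =
      momentumCovDeriv h φ q V u - (e / m₀) • symmCovDeriv φ A (q.1, q.2.1) u V.2.1 := by
  ext a
  have hsum : (deltaPMatrix h φ A e m₀ q V *ᵥ u) a = (polymomenta V *ᵥ u) a
      + ∑ i, (∑ b, N1 h a i b q * V.1 b) * u i
      + ∑ i, (∑ j, N2 φ A e m₀ a i j q * V.2.1 j) * u i := by
    simp only [Matrix.mulVec, dotProduct, deltaPMatrix, deltaPform, Matrix.of_apply, add_mul,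
      Finset.sum_add_distrib, polymomenta_apply]
  rw [hsum, sum_N1_mul, sum_N2_mul hA]
  simp only [momentumCovDeriv, Pi.sub_apply, Pi.add_apply, Pi.smul_apply, smul_eq_mul]
  ring

theorem deltaPMatrix_dualJetMap (hσ : IsMetricPullbackAt σ h htil q.1)
    (hτ : IsMetricPullbackAt τ φ φtil q.2.1)
    (hA : DifferentiableAt ℝ (potentialMatrix A) (q.1, q.2.1))
    (hAtil : DifferentiableAt ℝ (potentialMatrix Atil) (σ q.1, τ q.2.1))
    (hlaw : ∀ᶠ y in 𝓝 q.2.1, potentialMatrix Atil (σ q.1, τ y) * jacobian τ y =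
      jacobian σ q.1 * potentialMatrix A (q.1, y)) (e m₀ : ℝ) (V : Jet m n) :
    deltaPMatrix htil φtil Atil e m₀ (dualJetMap σ τ q) (fderiv ℝ (dualJetMap σ τ) q V) *
        jacobian τ q.2.1 =
      jacobian σ q.1 * deltaPMatrix h φ A e m₀ q V := by
  obtain ⟨-, hJτ⟩ := hτ.isUnit_det_target_and_jacobian
  have hdual := differentiableAt_dualJetMap hσ.contDiffAt hτ.contDiffAt hJτ
  refine Matrix.ext_iff_mulVec.2 fun u => ?_
  rw [← Matrix.mulVec_mulVec, ← Matrix.mulVec_mulVec, deltaPMatrix_mulVec htil hAtil,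
    deltaPMatrix_mulVec h hA, momentumCovDeriv_dualJetMap hσ hτ,
    fderiv_dualJetMap_snd_fst hτ.map_differentiableAt hdual, Matrix.mulVec_sub,
    Matrix.mulVec_smul]
  congr 2
  exact symmCovDeriv_jacobian_mulVec hτ hA hAtil hlaw u V.2.1

theorem nonlinear_connection_of_electrodynamics_transforms_tensorially_general
    (hσ : IsMetricPullbackAt σ h htil q.1) (hτ : IsMetricPullbackAt τ φ φtil q.2.1)
    (hA : ∀ a i, DifferentiableAt ℝ (A a i) (q.1, q.2.1))
    (hAtil : ∀ a i, DifferentiableAt ℝ (Atil a i) (σ q.1, τ q.2.1))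
    (hlaw : ∀ᶠ y in 𝓝 q.2.1, ∀ atil itil, Atil atil itil (σ q.1, τ y) =
      ∑ a, ∑ i, A a i (q.1, y) * jacobian σ q.1 atil a * (jacobian τ y)⁻¹ i itil)
    (e m₀ : ℝ) (V : Jet m n) (atil : Fin m) (itil : Fin n) :
    deltaPform htil φtil Atil e m₀ atil itil (dualJetMap σ τ q)
        (fderiv ℝ (dualJetMap σ τ) q V) =
      ∑ a, ∑ i, jacobian σ q.1 atil a * (jacobian τ q.2.1)⁻¹ i itil
        * deltaPform h φ A e m₀ a i q V := by
  obtain ⟨-, hJτ⟩ := hτ.isUnit_det_target_and_jacobian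
  have hpot : ∀ᶠ y in 𝓝 q.2.1, potentialMatrix Atil (σ q.1, τ y) * jacobian τ y =
      jacobian σ q.1 * potentialMatrix A (q.1, y) := by
    filter_upwards [hlaw, eventually_isUnit_det_jacobian hτ.contDiffAt hJτ] with y hy hJy
    exact potentialMatrix_mul_of_tensor_law hJy hy
  have hδ := deltaPMatrix_dualJetMap hσ hτ (differentiableAt_matrix_iff.2 hA)
    (differentiableAt_matrix_iff.2 hAtil) hpot e m₀ V
  calc deltaPform htil φtil Atil e m₀ atil itil (dualJetMap σ τ q)
        (fderiv ℝ (dualJetMap σ τ) q V)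
      = (jacobian σ q.1 * deltaPMatrix h φ A e m₀ q V * (jacobian τ q.2.1)⁻¹) atil itil := by
        rw [← hδ, Matrix.mul_nonsing_inv_cancel_right _ _ hJτ]
        rfl
    _ = ∑ a, ∑ i, jacobian σ q.1 atil a * (jacobian τ q.2.1)⁻¹ i itil
          * deltaPform h φ A e m₀ a i q V := by
        rw [matrix_mul_mul_apply_eq_sum]
        exact Finset.sum_congr rfl fun a _ => Finset.sum_congr rfl fun i _ => by
          rw [deltaPMatrix, Matrix.of_apply]
          ring

end NonlinearConnection

/-- The pair `(N₁_{(i)b}^{(a)}, N₂_{(i)j}^{(a)})` is a nonlinear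
connection on the dual 1-jet space: under any change of coordinates induced by
diffeomorphisms `σ : T → T̃` and `τ : X → X̃` (with the metrics, the potentials and
the polymomenta transforming tensorially), the local 1-forms
`δp^a_i = dp^a_i + N₁_{(i)b}^{(a)} dt^b + N₂_{(i)j}^{(a)} dx^j` transform
tensorially: `δp̃^ã_ĩ = (∂t̃^ã/∂t^a)(∂x^i/∂x̃^ĩ) δp^a_i`, i.e., the two 1-forms
agree on every tangent vector of `T × X × ℝ^{m·n}`. -/
theorem nonlinear_connection_of_electrodynamics_transforms_tensorially
    {m n : ℕ} (hm : 1 ≤ m) (hn : 1 ≤ n)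
    (T Ttil : Set (Fin m → ℝ)) (X Xtil : Set (Fin n → ℝ))
    (hT : IsOpen T) (hTtil : IsOpen Ttil) (hX : IsOpen X) (hXtil : IsOpen Xtil)
    (σ : (Fin m → ℝ) → (Fin m → ℝ)) (τ : (Fin n → ℝ) → (Fin n → ℝ))
    (hσsm : ContDiffOn ℝ (⊤ : ℕ∞) σ T) (hσbij : Set.BijOn σ T Ttil)
    (hσJ : ∀ t ∈ T, IsUnit (jacobian σ t).det)
    (hτsm : ContDiffOn ℝ (⊤ : ℕ∞) τ X) (hτbij : Set.BijOn τ X Xtil)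
    (hτJ : ∀ x ∈ X, IsUnit (jacobian τ x).det)
    (h htil : (Fin m → ℝ) → Matrix (Fin m) (Fin m) ℝ)
    (hsm : ∀ a b, ContDiffOn ℝ (⊤ : ℕ∞) (fun t => h t a b) T)
    (hpos : ∀ t ∈ T, (h t).PosDef)
    (htilsm : ∀ a b, ContDiffOn ℝ (⊤ : ℕ∞) (fun t => htil t a b) Ttil)
    (φ φtil : (Fin n → ℝ) → Matrix (Fin n) (Fin n) ℝ)
    (φsm : ∀ i j, ContDiffOn ℝ (⊤ : ℕ∞) (fun x => φ x i j) X)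
    (φsymm : ∀ x ∈ X, (φ x).IsSymm) (φinv : ∀ x ∈ X, IsUnit (φ x).det)
    (φtilsm : ∀ i j, ContDiffOn ℝ (⊤ : ℕ∞) (fun x => φtil x i j) Xtil)
    (m₀ e : ℝ) (hm₀ : m₀ ≠ 0)
    (A Atil : Fin m → Fin n → (Fin m → ℝ) × (Fin n → ℝ) → ℝ)
    (hA : ∀ a i, ContDiffOn ℝ (⊤ : ℕ∞) (A a i) (T ×ˢ X))
    (hAtil : ∀ a i, ContDiffOn ℝ (⊤ : ℕ∞) (Atil a i) (Ttil ×ˢ Xtil))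
    -- the transformation law of the temporal metric:
    -- `h̃_{ãb̃}(t̃) = h_{ab}(t) (∂t^a/∂t̃^ã)(∂t^b/∂t̃^b̃)`
    (hhtrans : ∀ t ∈ T, ∀ atil btil : Fin m,
      htil (σ t) atil btil
        = ∑ a, ∑ b, h t a b * (jacobian σ t)⁻¹ a atil * (jacobian σ t)⁻¹ b btil)
    -- the transformation law of the spatial metric:
    -- `φ̃_{ĩj̃}(x̃) = φ_{ij}(x) (∂x^i/∂x̃^ĩ)(∂x^j/∂x̃^j̃)`
    (hφtrans : ∀ x ∈ X, ∀ itil jtil : Fin n,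
      φtil (τ x) itil jtil
        = ∑ i, ∑ j, φ x i j * (jacobian τ x)⁻¹ i itil * (jacobian τ x)⁻¹ j jtil)
    -- the transformation law of the electromagnetic potentials:
    -- `Ã^{(ã)}_{(ĩ)} = A^{(a)}_{(i)} (∂t̃^ã/∂t^a)(∂x^i/∂x̃^ĩ)`
    (hAtrans : ∀ t ∈ T, ∀ x ∈ X, ∀ atil : Fin m, ∀ itil : Fin n,
      Atil atil itil (σ t, τ x)
        = ∑ a, ∑ i, A a i (t, x) * jacobian σ t atil a * (jacobian τ x)⁻¹ i itil) :
    -- the induced transformation of the dual 1-jet space, including the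
    -- polymomenta transformation `p̃^ã_ĩ = p^a_i (∂t̃^ã/∂t^a)(∂x^i/∂x̃^ĩ)`
    ∀ t ∈ T, ∀ x ∈ X, ∀ p : Fin m → Fin n → ℝ, ∀ atil : Fin m, ∀ itil : Fin n,
      ∀ V : Jet m n,
        deltaPform htil φtil Atil e m₀ atil itil
          ((fun q : Jet m n => ((σ q.1, τ q.2.1,
              fun atil' itil' => ∑ a, ∑ i, q.2.2 a i * jacobian σ q.1 atil' a
                * (jacobian τ q.2.1)⁻¹ i itil') : Jet m n)) (t, x, p))
          (fderiv ℝ (fun q : Jet m n => ((σ q.1, τ q.2.1,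
              fun atil' itil' => ∑ a, ∑ i, q.2.2 a i * jacobian σ q.1 atil' a
                * (jacobian τ q.2.1)⁻¹ i itil') : Jet m n)) (t, x, p) V)
        = ∑ a, ∑ i, jacobian σ t atil a * (jacobian τ x)⁻¹ i itil
            * deltaPform h φ A e m₀ a i (t, x, p) V := by
  intro t ht x hx p atil itil V
  have hpull_h : IsMetricPullbackAt σ h htil t :=
    .of_tensor_law hT hTtil (contDiffOn_infty.1 hσsm 2) hσbij.mapsTo hσJ
      (fun a b => (htilsm a b).differentiableOn (by simp)) hhtrans ht
      ((Matrix.conjTranspose_eq_transpose_of_trivial _).symm.trans (hpos t ht).isHermitian)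
      (hpos t ht).det_pos.ne'.isUnit
  have hpull_φ : IsMetricPullbackAt τ φ φtil x :=
    .of_tensor_law hX hXtil (contDiffOn_infty.1 hτsm 2) hτbij.mapsTo hτJ
      (fun i j => (φtilsm i j).differentiableOn (by simp)) hφtrans hx (φsymm x hx) (φinv x hx)
  have hdiff : ∀ a i, DifferentiableAt ℝ (A a i) (t, x) := fun a i =>
    ((hA a i).differentiableOn (by simp)).differentiableAt
      ((hT.prod hX).mem_nhds ⟨ht, hx⟩)
  have hdifftil : ∀ a i, DifferentiableAt ℝ (Atil a i) (σ t, τ x) := fun a i =>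
    ((hAtil a i).differentiableOn (by simp)).differentiableAt
      ((hTtil.prod hXtil).mem_nhds ⟨hσbij.mapsTo ht, hτbij.mapsTo hx⟩)
  exact nonlinear_connection_of_electrodynamics_transforms_tensorially_general (q := (t, x, p))
    hpull_h hpull_φ hdiff hdifftil
    (Filter.eventually_of_mem (hX.mem_nhds hx) (hAtrans t ht)) e m₀ V atil itil

end
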